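/- Let G be a finite simple graph and let S be a set of vertices of G such that the subgraph of G induced on S is isomorphic to T₆ (K_{3,3} minus an edge) and at most 3 edges of G have exactly one endpoint in S. Then for every set F of vertices of G disjoint from S that induces an acyclic subgraph of G, there exists a 4-element subset S' of S such that F ∪ S' induces an acyclic subgraph of G. -/

import Mathlib

/-- The graph `T₆`: the complete bipartite graph `K_{3,3}` with parts
`{inl 0, inl 1, inl 2}` and `{inr 0, inr 1, inr 2}`, minus the edge `inl 2 — inr 2`. -/
def T6graph : SimpleGraph (Fin 3 ⊕ Fin 3) where
  Adj x y := (∃ i j, x = Sum.inl i ∧ y = Sum.inr j ∧ ¬(i = 2 ∧ j = 2)) ∨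
             (∃ i j, x = Sum.inr j ∧ y = Sum.inl i ∧ ¬(i = 2 ∧ j = 2))
  symm := by
    constructor
    rintro x y (⟨i, j, h1, h2, h3⟩ | ⟨i, j, h1, h2, h3⟩)
    · exact Or.inr ⟨i, j, h2, h1, h3⟩
    · exact Or.inl ⟨i, j, h2, h1, h3⟩
  loopless := by
    constructor
    rintro x (⟨i, j, h1, h2, -⟩ | ⟨i, j, h1, h2, -⟩) <;> simp_all

/-- The set of edges of `G` with exactly one endpoint in `S`. -/
def edgeCut {V : Type*} (G : SimpleGraph V) (S : Set V) : Set (Sym2 V) :=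
  {e | e ∈ G.edgeSet ∧ ∃ u v, e = s(u, v) ∧ u ∈ S ∧ v ∉ S}


open Classical in
/-- Adding a vertex with at most one neighbour keeps an induced forest acyclic. -/
lemma acyclic_insert {V : Type*} [Finite V] (G : SimpleGraph V) (A : Set V) (v : V)
    (hA : (G.induce A).IsAcyclic)
    (hv : {x | x ∈ A ∧ G.Adj v x}.ncard ≤ 1) : (G.induce (insert v A)).IsAcyclic := by
  intro u c hc
  have hsub : ∀ x y, x ∈ A → y ∈ A → G.Adj v x → G.Adj v y → x = y := by
    intro x y hx hy h1 h2
    exact (Set.ncard_le_one (Set.toFinite _)).1 hv x ⟨hx, h1⟩ y ⟨hy, h2⟩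
  let f := (SimpleGraph.Embedding.induce (G := G) (insert v A)).toHom
  have hf : Function.Injective f := Subtype.val_injective
  by_cases hvs : (⟨v, Set.mem_insert v A⟩ : (insert v A : Set V)) ∈ c.support
  · have hr := hc.rotate hvs
    have h1 := SimpleGraph.Walk.adj_snd hr.not_nil
    have h2 := (SimpleGraph.Walk.adj_penultimate hr.not_nil).symm
    apply hr.snd_ne_penultimate
    apply Subtype.ext
    have e1 : G.Adj v _ := h1
    have e2 : G.Adj v _ := h2
    exact hsub _ _ (Set.mem_of_mem_insert_of_ne (Subtype.property _) e1.ne')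
      (Set.mem_of_mem_insert_of_ne (Subtype.property _) e2.ne') e1 e2
  · have hc' : (c.map f).IsCycle := hc.map hf
    have hs : ∀ x ∈ (c.map f).support, x ∈ A := by
      intro x hx
      rw [SimpleGraph.Walk.support_map, List.mem_map] at hx
      obtain ⟨y, hy, rfl⟩ := hx
      refine Set.mem_of_mem_insert_of_ne y.2 ?_
      intro h
      apply hvs
      convert hy
      exact h.symm
    refine hA ((c.map f).induce A hs) ?_
    apply SimpleGraph.Walk.IsCycle.of_map (f := (SimpleGraph.Embedding.induce (G := G) A).toHom)
    rw [SimpleGraph.Walk.map_induce]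
    exact hc'

/-- The adjacency indicator of `T6graph`. -/
def t6adj : Fin 3 ⊕ Fin 3 → Fin 3 ⊕ Fin 3 → ℕ
  | .inl i, .inr j => if i = 2 ∧ j = 2 then 0 else 1
  | .inr j, .inl i => if i = 2 ∧ j = 2 then 0 else 1
  | _, _ => 0

lemma t6adj_of_adj (x y : Fin 3 ⊕ Fin 3) (h : T6graph.Adj x y) : t6adj x y = 1 := by
  rcases h with (⟨i, j, rfl, rfl, h⟩ | ⟨i, j, rfl, rfl, h⟩) <;> simp [t6adj, h]

lemma t6_choice (w : Fin 3 ⊕ Fin 3 → ℕ) (hw : ∑ i, w i ≤ 3) :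
    ∃ p q r s : Fin 3 ⊕ Fin 3, ({p, q, r, s} : Finset (Fin 3 ⊕ Fin 3)).card = 4 ∧
      w p ≤ 1 ∧ w q ≤ 1 - t6adj q p ∧ w r ≤ 1 - (t6adj r p + t6adj r q) ∧
      w s ≤ 1 - (t6adj s p + t6adj s q + t6adj s r) ∧
      t6adj q p ≤ 1 ∧ t6adj r p + t6adj r q ≤ 1 ∧ t6adj s p + t6adj s q + t6adj s r ≤ 1 := by
  simp only [Fintype.sum_sum_type, Fin.sum_univ_three] at hw
  have key : (w (.inl 0) ≤ 1 ∧ w (.inl 2) ≤ 1 ∧ w (.inr 2) ≤ 0 ∧ w (.inl 1) ≤ 0) ∨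
      (w (.inl 2) ≤ 1 ∧ w (.inr 0) ≤ 0 ∧ w (.inr 1) ≤ 0 ∧ w (.inr 2) ≤ 1) ∨
      (w (.inl 1) ≤ 1 ∧ w (.inr 0) ≤ 0 ∧ w (.inl 0) ≤ 0 ∧ w (.inl 2) ≤ 0) ∨
      (w (.inr 0) ≤ 1 ∧ w (.inl 0) ≤ 0 ∧ w (.inr 1) ≤ 0 ∧ w (.inr 2) ≤ 0) ∨
      (w (.inl 0) ≤ 1 ∧ w (.inr 1) ≤ 0 ∧ w (.inl 1) ≤ 0 ∧ w (.inl 2) ≤ 0) ∨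
      (w (.inr 1) ≤ 1 ∧ w (.inl 2) ≤ 0 ∧ w (.inr 0) ≤ 0 ∧ w (.inr 2) ≤ 1) ∨
      (w (.inl 1) ≤ 1 ∧ w (.inl 2) ≤ 1 ∧ w (.inr 2) ≤ 0 ∧ w (.inl 0) ≤ 0) ∨
      (w (.inl 2) ≤ 1 ∧ w (.inr 2) ≤ 1 ∧ w (.inl 0) ≤ 0 ∧ w (.inl 1) ≤ 0) ∨
      (w (.inr 0) ≤ 1 ∧ w (.inl 2) ≤ 0 ∧ w (.inr 1) ≤ 0 ∧ w (.inr 2) ≤ 1) ∨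
      (w (.inr 1) ≤ 1 ∧ w (.inl 1) ≤ 0 ∧ w (.inr 0) ≤ 0 ∧ w (.inr 2) ≤ 0) ∨
      (w (.inl 2) ≤ 1 ∧ w (.inr 0) ≤ 0 ∧ w (.inl 0) ≤ 0 ∧ w (.inl 1) ≤ 0) ∨
      (w (.inr 2) ≤ 1 ∧ w (.inl 0) ≤ 0 ∧ w (.inr 0) ≤ 0 ∧ w (.inr 1) ≤ 0) := by
    omega
  rcases key with h | h | h | h | h | h | h | h | h | h | h | h
  · exact ⟨.inl 0, .inl 2, .inr 2, .inl 1, by decide, h.1, h.2.1, h.2.2.1, h.2.2.2, by decide, by decide, by decide⟩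
  · exact ⟨.inl 2, .inr 0, .inr 1, .inr 2, by decide, h.1, h.2.1, h.2.2.1, h.2.2.2, by decide, by decide, by decide⟩
  · exact ⟨.inl 1, .inr 0, .inl 0, .inl 2, by decide, h.1, h.2.1, h.2.2.1, h.2.2.2, by decide, by decide, by decide⟩
  · exact ⟨.inr 0, .inl 0, .inr 1, .inr 2, by decide, h.1, h.2.1, h.2.2.1, h.2.2.2, by decide, by decide, by decide⟩
  · exact ⟨.inl 0, .inr 1, .inl 1, .inl 2, by decide, h.1, h.2.1, h.2.2.1, h.2.2.2, by decide, by decide, by decide⟩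
  · exact ⟨.inr 1, .inl 2, .inr 0, .inr 2, by decide, h.1, h.2.1, h.2.2.1, h.2.2.2, by decide, by decide, by decide⟩
  · exact ⟨.inl 1, .inl 2, .inr 2, .inl 0, by decide, h.1, h.2.1, h.2.2.1, h.2.2.2, by decide, by decide, by decide⟩
  · exact ⟨.inl 2, .inr 2, .inl 0, .inl 1, by decide, h.1, h.2.1, h.2.2.1, h.2.2.2, by decide, by decide, by decide⟩
  · exact ⟨.inr 0, .inl 2, .inr 1, .inr 2, by decide, h.1, h.2.1, h.2.2.1, h.2.2.2, by decide, by decide, by decide⟩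
  · exact ⟨.inr 1, .inl 1, .inr 0, .inr 2, by decide, h.1, h.2.1, h.2.2.1, h.2.2.2, by decide, by decide, by decide⟩
  · exact ⟨.inl 2, .inr 0, .inl 0, .inl 1, by decide, h.1, h.2.1, h.2.2.1, h.2.2.2, by decide, by decide, by decide⟩
  · exact ⟨.inr 2, .inl 0, .inr 0, .inr 1, by decide, h.1, h.2.1, h.2.2.1, h.2.2.2, by decide, by decide, by decide⟩

lemma nbr_insert {V : Type*} [Finite V] (G : SimpleGraph V) (A : Set V) (v p : V) (k m : ℕ)
    (hA : {x | x ∈ A ∧ G.Adj v x}.ncard ≤ m) (h : G.Adj v p → k = 1) :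
    {x | x ∈ insert p A ∧ G.Adj v x}.ncard ≤ m + k := by
  by_cases hp : G.Adj v p
  · rw [h hp]
    calc _ ≤ (insert p {x | x ∈ A ∧ G.Adj v x}).ncard := by
          apply Set.ncard_le_ncard _ (Set.toFinite _)
          rintro x ⟨rfl | hx, h2⟩
          · exact Set.mem_insert _ _
          · exact Set.mem_insert_of_mem _ ⟨hx, h2⟩
      _ ≤ _ := (Set.ncard_insert_le _ _).trans (by omega)
  · refine le_trans (Set.ncard_le_ncard ?_ (Set.toFinite _)) (hA.trans (Nat.le_add_right _ _))
    rintro x ⟨rfl | hx, h2⟩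
    · exact absurd h2 hp
    · exact ⟨hx, h2⟩

/-- If `S` induces a copy of `T₆` in `G` with at most 3 edges of `G` leaving `S`, then
any induced forest `F` of `G` disjoint from `S` can be extended by 4 vertices of `S`. -/
theorem extend_forest_of_T6_subgraph {V : Type*} [Fintype V] (G : SimpleGraph V)
    (S : Finset V)
    (hiso : Nonempty ((G.induce (S : Set V)) ≃g T6graph))
    (hcut : (edgeCut G (S : Set V)).ncard ≤ 3)
    (F : Set V) (hdisj : Disjoint F (S : Set V)) (hF : (G.induce F).IsAcyclic) :
    ∃ S' : Finset V, S' ⊆ S ∧ S'.card = 4 ∧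
      (G.induce (F ∪ (S' : Set V))).IsAcyclic := by

  classical
  obtain ⟨φ⟩ := hiso
  let e : Fin 3 ⊕ Fin 3 → V := fun i => (φ.symm i).1
  have heS : ∀ i, e i ∈ S := fun i => (φ.symm i).2
  have hinj : Function.Injective e := Subtype.val_injective.comp φ.symm.injective
  have hadj : ∀ i j, G.Adj (e i) (e j) → t6adj i j = 1 := by
    intro i j h
    apply t6adj_of_adj
    exact φ.symm.map_adj_iff.1 h
  have hFS : ∀ x ∈ F, x ∉ S := fun x hx hs => Set.disjoint_left.1 hdisj hx hs
  let N : Fin 3 ⊕ Fin 3 → Set V := fun i => {x | x ∈ F ∧ G.Adj (e i) x}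
  have hsum : ∑ i, (N i).ncard ≤ 3 := by
    refine le_trans ?_ hcut
    simp only [Set.ncard_eq_toFinset_card']
    rw [← Finset.card_sigma]
    apply Finset.card_le_card_of_injOn (fun z => s(e z.1, z.2))
    · rintro ⟨i, x⟩ hz
      have hz' : x ∈ N i := by simpa using hz
      simp only [Set.coe_toFinset]
      exact ⟨hz'.2, e i, x, rfl, heS i, hFS x hz'.1⟩
    · rintro ⟨i, x⟩ hz ⟨j, y⟩ hz2 h
      have hz' : x ∈ N i := by simpa using hz
      have hz2' : y ∈ N j := by simpa using hz2
      rcases Sym2.eq_iff.1 h with ⟨h1, h2⟩ | ⟨h1, h2⟩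
      · obtain rfl := hinj h1
        obtain rfl : x = y := h2
        rfl
      · have h3 : e i = y := h1
        exact absurd (h3 ▸ heS i) (hFS y hz2'.1)
  obtain ⟨p, q, r, s, hcard, hp, hq, hr, hs, b1, b2, b3⟩ := t6_choice (fun i => (N i).ncard) hsum
  refine ⟨({p, q, r, s} : Finset (Fin 3 ⊕ Fin 3)).image e, ?_, ?_, ?_⟩
  · intro x hx
    obtain ⟨i, -, rfl⟩ := Finset.mem_image.1 hx
    exact heS i
  · rw [Finset.card_image_of_injective _ hinj, hcard]
  · have h1 := acyclic_insert G F (e p) hF hp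
    have h2 := acyclic_insert G _ (e q) h1 ((nbr_insert G F (e q) (e p) _ _ hq (hadj q p)).trans
      (by omega))
    have h3 := acyclic_insert G _ (e r) h2 ((nbr_insert G _ (e r) (e q) _ _
      (nbr_insert G F (e r) (e p) _ _ hr (hadj r p)) (hadj r q)).trans (by omega))
    have h4 := acyclic_insert G _ (e s) h3 ((nbr_insert G _ (e s) (e r) _ _
      (nbr_insert G _ (e s) (e q) _ _
      (nbr_insert G F (e s) (e p) _ _ hs (hadj s p)) (hadj s q)) (hadj s r)).trans (by omega))
    convert h4 using 2 <;>
    · ext x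
      simp only [Finset.coe_image, Finset.coe_insert, Finset.coe_singleton, Set.image_insert_eq,
        Set.image_singleton, Set.mem_union, Set.mem_insert_iff, Set.mem_singleton_iff]
      tauto
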